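/- Let P = (V, E, ⟨V₁, V_R⟩) be an MDP, let X ⊆ V, let A = Attr_R^P(X) be the random attractor of X in P, and let W = V \ A. Then every maximal end-component of the sub-MDP P[W] is contained in a maximal end-component of P. In particular, if two vertices u and w lie in the same maximal end-component of P[W], then they lie in the same maximal end-component of P. -/

import Mathlib

/-- A path from `u` to `w` using only edges whose endpoints lie in `U`. -/
def PathIn {V : Type*} (E : V → V → Prop) (U : Set V) : V → V → Prop :=
  Relation.ReflTransGen (fun a b => a ∈ U ∧ b ∈ U ∧ E a b)

/-- `U` is strongly connected: any vertex of `U` reaches any other within `U`. -/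
def StronglyConnected {V : Type*} (E : V → V → Prop) (U : Set V) : Prop :=
  ∀ u ∈ U, ∀ w ∈ U, PathIn E U u w

/-- `U` is an end-component of the MDP with edges `E` and random vertices `VR`. -/
def IsEC {V : Type*} (E : V → V → Prop) (VR U : Set V) : Prop :=
  StronglyConnected E U ∧ ∀ u ∈ U ∩ VR, ∀ w, E u w → w ∈ U

/-- A nontrivial end-component: an EC with at least 2 vertices. -/
def IsNontrivialEC {V : Type*} (E : V → V → Prop) (VR U : Set V) : Prop :=
  IsEC E VR U ∧ 2 ≤ U.ncard

/-- A maximal end-component: a nontrivial EC maximal w.r.t. inclusion among nontrivial ECs. -/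
def IsMEC {V : Type*} (E : V → V → Prop) (VR U : Set V) : Prop :=
  IsNontrivialEC E VR U ∧ ∀ U', IsNontrivialEC E VR U' → U ⊆ U' → U' = U

/-- The random attractor of `T` in the sub-MDP of `(E, VR)` induced by the vertex
set `S`: the least set containing `T`, closed under adding random vertices of the
sub-MDP with some edge into it, and player-1 vertices of the sub-MDP all of whose
outgoing edges (in the sub-MDP) lead into it.  (The full MDP is `S = Set.univ`.) -/
inductive AttrR {V : Type*} (S : Set V) (E : V → V → Prop) (VR T : Set V) : V → Prop
  | base {v : V} : v ∈ T → AttrR S E VR T v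
  | rand {v w : V} : v ∈ S → v ∈ VR → w ∈ S → E v w → AttrR S E VR T w →
      AttrR S E VR T v
  | play {v : V} : v ∈ S → v ∉ VR → (∀ w ∈ S, E v w → AttrR S E VR T w) →
      AttrR S E VR T v

/-!
A random vertex with an edge into an attractor lies in the attractor, so no random edge leaves its
complement `W`.  Hence passing from `P[W]` to `P` adds no edge out of a random vertex of `W`, and a
nontrivial end-component of `P[W]` remains one of `P`; by finiteness it extends to a maximal one.
-/

/-- A set of vertices that no edge of a random vertex leaves: the closedness condition on
end-components.  Player-1 vertices are unconstrained. -/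
def IsRandomClosed {V : Type*} (E : V → V → Prop) (VR U : Set V) : Prop :=
  ∀ u ∈ U ∩ VR, ∀ w, E u w → w ∈ U

section

variable {V : Type*} {E E' : V → V → Prop} {VR S U W : Set V}

theorem isRandomClosed_univ : IsRandomClosed E VR Set.univ :=
  fun _ _ _ _ => Set.mem_univ _

theorem IsRandomClosed.sdiff_attrR (hS : IsRandomClosed E VR S) (X : Set V) :
    IsRandomClosed E VR (S \ {v | AttrR S E VR X v}) := by
  rintro u ⟨⟨huS, huA⟩, huR⟩ w huw
  have hwS : w ∈ S := hS u ⟨huS, huR⟩ w huw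
  exact ⟨hwS, fun hwA => huA (.rand huS huR hwS huw hwA)⟩

theorem IsRandomClosed.of_induced (hW : IsRandomClosed E VR W) (hUW : U ⊆ W)
    (hU : IsRandomClosed (fun a b => a ∈ W ∧ b ∈ W ∧ E a b) (VR ∩ W) U) :
    IsRandomClosed E VR U := by
  rintro u ⟨huU, huR⟩ w huw
  have huW : u ∈ W := hUW huU
  have hwW : w ∈ W := hW u ⟨huW, huR⟩ w huw
  exact hU u ⟨huU, huR, huW⟩ w ⟨huW, hwW, huw⟩

theorem StronglyConnected.mono (hE : ∀ a ∈ U, ∀ b ∈ U, E a b → E' a b)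
    (hU : StronglyConnected E U) : StronglyConnected E' U :=
  fun u hu w hw => Relation.ReflTransGen.mono
    (fun a b ⟨ha, hb, hab⟩ => ⟨ha, hb, hE a ha b hb hab⟩) u w (hU u hu w hw)

theorem IsEC.of_induced (hW : IsRandomClosed E VR W) (hUW : U ⊆ W)
    (hU : IsEC (fun a b => a ∈ W ∧ b ∈ W ∧ E a b) (VR ∩ W) U) : IsEC E VR U :=
  ⟨hU.1.mono fun _ _ _ _ hab => hab.2.2, hW.of_induced hUW hU.2⟩

theorem isMEC_iff_maximal : IsMEC E VR U ↔ Maximal (IsNontrivialEC E VR) U := by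
  simp only [IsMEC, maximal_subset_iff, eq_comm]

theorem IsNontrivialEC.exists_isMEC_superset [Finite V] (hU : IsNontrivialEC E VR U) :
    ∃ M, IsMEC E VR M ∧ U ⊆ M := by
  obtain ⟨M, hUM, hM⟩ := (Set.toFinite {S | IsNontrivialEC E VR S}).exists_le_maximal hU
  exact ⟨M, isMEC_iff_maximal.mpr hM, hUM⟩

theorem MEC_of_subMDP_contained_in_MEC_general [Finite V] (hW : IsRandomClosed E VR W)
    (hUW : U ⊆ W)
    (hU : IsNontrivialEC (fun a b => a ∈ W ∧ b ∈ W ∧ E a b) (VR ∩ W) U) :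
    ∃ M, IsMEC E VR M ∧ U ⊆ M :=
  IsNontrivialEC.exists_isMEC_superset ⟨hU.1.of_induced hW hUW, hU.2⟩

end

/-- Let `A` be the random attractor of `X` in the MDP and `W = V \ A`.  Then every
maximal end-component of the sub-MDP induced by `W` is contained in some maximal
end-component of the MDP; in particular, vertices lying in a common MEC of the
sub-MDP lie in a common MEC of the MDP. -/
theorem MEC_of_subMDP_contained_in_MEC {V : Type*} [Fintype V]
    (E : V → V → Prop) (VR : Set V) (hNoSelf : ∀ v : V, ¬ E v v)
    (X : Set V)
    (A : Set V) (hA : A = {v | AttrR Set.univ E VR X v})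
    (W : Set V) (hW : W = Aᶜ)
    (U : Set V) (hUW : U ⊆ W)
    (hU : IsMEC (fun a b => a ∈ W ∧ b ∈ W ∧ E a b) (VR ∩ W) U) :
    ∃ M : Set V, IsMEC E VR M ∧ U ⊆ M := by
  have hclosed : IsRandomClosed E VR W := by
    rw [hW, hA, Set.compl_eq_univ_sdiff]
    exact isRandomClosed_univ.sdiff_attrR X
  exact MEC_of_subMDP_contained_in_MEC_general hclosed hUW hU.1
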